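/- arXiv:2601.02762 — 4 statements merged into one kernel-verified Lean document; each statement's English description precedes it below -/
import Mathlib

section
/- Let L be a symmetric positive-definite n×n real matrix whose smallest eigenvalue is ℓ > 0. Let x, ξ, d_model, γ, F : ℝ → ℝⁿ be functions with x, ξ, d_model, γ differentiable, and define the disturbance d = d_model + γ, the auxiliary dynamics ξ'(t) = −L(ξ(t) + d_model(t) + L x(t) + F(t)), the state dynamics x'(t) = F(t) + d(t), and the estimate d̂ = d_model + L x + ξ. If ‖γ'(t)‖ ≤ D for all t ≥ 0, then for all t ≥ 0 the estimation error satisfies ‖d̂(t) − d(t)‖ ≤ e^{−ℓ t} ‖d̂(0) − d(0)‖ + (D/ℓ)(1 − e^{−ℓ t}); in particular the estimation error converges exponentially to the closed ball of radius D/ℓ. -/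
open Matrix

/-- The Rayleigh quotient of a Hermitian matrix is bounded below by any lower bound of its
eigenvalues. -/
theorem Matrix.IsHermitian.mul_norm_sq_le_inner_toEuclideanLin
    {ι : Type*} [Fintype ι] [DecidableEq ι] {A : Matrix ι ι ℝ} (hA : A.IsHermitian) {c : ℝ}
    (hc : ∀ i, c ≤ hA.eigenvalues i) (v : EuclideanSpace ℝ ι) :
    c * ‖v‖ ^ 2 ≤ inner ℝ v (Matrix.toEuclideanLin A v) := by
  have hsymm : (Matrix.toEuclideanLin A).IsSymmetric :=
    Matrix.isSymmetric_toEuclideanLin_iff.mpr hA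
  have heig (i : ι) : Matrix.toEuclideanLin A (hA.eigenvectorBasis i) =
      hA.eigenvalues i • hA.eigenvectorBasis i := by
    ext j
    simpa using congrFun (hA.mulVec_eigenvectorBasis i) j
  rw [← hA.eigenvectorBasis.sum_inner_mul_inner v, ← real_inner_self_eq_norm_sq,
    ← hA.eigenvectorBasis.sum_inner_mul_inner v, Finset.mul_sum]
  refine Finset.sum_le_sum fun i _ => ?_
  rw [← hsymm, heig, real_inner_smul_left, real_inner_comm]
  nlinarith [mul_le_mul_of_nonneg_right (hc i)
    (mul_self_nonneg (inner ℝ (hA.eigenvectorBasis i) v))]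

/-- If `u' ≤ K - c u` on `[0, ∞)`, then `u` is bounded by the solution of `y' = K - c y` with the
same initial value. -/
theorem le_exp_mul_add_of_hasDerivAt_le {u u' : ℝ → ℝ} {c K : ℝ} (hc : 0 < c)
    (hu : ∀ t, HasDerivAt u (u' t) t) (hle : ∀ t, 0 ≤ t → u' t ≤ K - c * u t)
    {t : ℝ} (ht : 0 ≤ t) :
    u t ≤ Real.exp (-c * t) * u 0 + K / c * (1 - Real.exp (-c * t)) := by
  have hderiv (s : ℝ) : HasDerivAt (fun s => Real.exp (c * s) * (u s - K / c))
      (Real.exp (c * s) * c * (u s - K / c) + Real.exp (c * s) * u' s) s := by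
    have hexp : HasDerivAt (fun s => Real.exp (c * s)) (Real.exp (c * s) * c) s := by
      simpa using ((hasDerivAt_id s).const_mul c).exp
    exact hexp.mul ((hu s).sub_const _)
  have hanti : AntitoneOn (fun s => Real.exp (c * s) * (u s - K / c)) (Set.Ici 0) := by
    refine antitoneOn_of_deriv_nonpos (convex_Ici 0)
      (fun s _ => (hderiv s).continuousAt.continuousWithinAt)
      (fun s _ => (hderiv s).differentiableAt.differentiableWithinAt) fun s hs => ?_
    rw [interior_Ici] at hs
    rw [(hderiv s).deriv]
    have hrw : Real.exp (c * s) * c * (u s - K / c) + Real.exp (c * s) * u' s =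
        Real.exp (c * s) * (u' s - (K - c * u s)) := by
      field_simp
      ring
    rw [hrw]
    exact mul_nonpos_of_nonneg_of_nonpos (Real.exp_pos _).le
      (sub_nonpos.mpr (hle s (le_of_lt hs)))
  have h0 := hanti Set.self_mem_Ici ht ht
  simp only [mul_zero, Real.exp_zero, one_mul] at h0
  have h1 := mul_le_mul_of_nonneg_left h0 (Real.exp_pos (-c * t)).le
  rw [← mul_assoc, ← Real.exp_add, neg_mul, neg_add_cancel, Real.exp_zero, one_mul] at h1
  rw [neg_mul]
  linarith

/-- A differentiable curve whose velocity satisfies `⟪e, e'⟫ ≤ D ‖e‖ - c ‖e‖²` on `[0, ∞)`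
converges exponentially to the ball of radius `D / c`. -/
theorem norm_le_exp_mul_add_of_inner_deriv_le {E : Type*} [NormedAddCommGroup E]
    [InnerProductSpace ℝ E] {e e' : ℝ → E} {c D : ℝ} (hc : 0 < c) (hD : 0 ≤ D)
    (he : ∀ t, HasDerivAt e (e' t) t)
    (hle : ∀ t, 0 ≤ t → inner ℝ (e t) (e' t) ≤ D * ‖e t‖ - c * ‖e t‖ ^ 2)
    {t : ℝ} (ht : 0 ≤ t) :
    ‖e t‖ ≤ Real.exp (-c * t) * ‖e 0‖ + D / c * (1 - Real.exp (-c * t)) := by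
  refine le_of_forall_pos_le_add fun ε hε => ?_
  -- The norm need not be differentiable at zeros of `e`, so it is smoothed.
  set u : ℝ → ℝ := fun s => √(‖e s‖ ^ 2 + ε ^ 2) with hu_def
  have hpos (s : ℝ) : 0 < ‖e s‖ ^ 2 + ε ^ 2 := by positivity
  have hu_pos (s : ℝ) : 0 < u s := Real.sqrt_pos.mpr (hpos s)
  have hu_sq (s : ℝ) : u s ^ 2 = ‖e s‖ ^ 2 + ε ^ 2 := Real.sq_sqrt (hpos s).le
  have hnorm_le (s : ℝ) : ‖e s‖ ≤ u s := Real.le_sqrt_of_sq_le (by nlinarith)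
  have hε_le (s : ℝ) : ε ≤ u s := Real.le_sqrt_of_sq_le (by nlinarith [sq_nonneg ‖e s‖])
  have hu (s : ℝ) : HasDerivAt u (inner ℝ (e s) (e' s) / u s) s := by
    have h := (((he s).norm_sq).add_const (ε ^ 2)).sqrt (hpos s).ne'
    rwa [mul_div_mul_left _ _ two_ne_zero] at h
  have hu_le (s : ℝ) (hs : 0 ≤ s) :
      inner ℝ (e s) (e' s) / u s ≤ (D + c * ε) - c * u s := by
    rw [div_le_iff₀ (hu_pos s)]
    have h1 := mul_le_mul_of_nonneg_left (hnorm_le s) hD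
    have h2 := mul_le_mul_of_nonneg_left (hε_le s) (mul_pos hc hε).le
    have h3 : c * u s ^ 2 = c * (‖e s‖ ^ 2 + ε ^ 2) := by rw [hu_sq]
    linarith [hle s hs]
  have hu0 : u 0 ≤ ‖e 0‖ + ε :=
    Real.sqrt_le_iff.mpr ⟨by positivity, by nlinarith [norm_nonneg (e 0)]⟩
  have hbound := le_exp_mul_add_of_hasDerivAt_le hc hu hu_le ht
  have hinit := mul_le_mul_of_nonneg_left hu0 (Real.exp_pos (-c * t)).le
  have hsplit : (D + c * ε) / c = D / c + ε := by field_simp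
  rw [hsplit] at hbound
  linarith [hnorm_le t]

/-- **Theorem 1 of the paper.** The feedback-calibrated disturbance observer
`d̂ = d_model + L x + ξ` with auxiliary dynamics `ξ' = −L(ξ + d_model + L x + F)`,
applied to `x' = F + d` where `d = d_model + γ` and the learning residual `γ`
has derivative bounded by `D`, has estimation error satisfying
`‖d̂(t) − d(t)‖ ≤ e^{−ℓ t}‖d̂(0) − d(0)‖ + (D/ℓ)(1 − e^{−ℓ t})`,
where `ℓ > 0` is the smallest eigenvalue of the symmetric positive-definite gain `L`. -/
theorem feedback_calibrated_observer_error_bound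
    {n : ℕ} (L : Matrix (Fin n) (Fin n) ℝ)
    (hLsymm : L.IsSymm) (hLpd : L.PosDef)
    (ℓ : ℝ) (hℓ : 0 < ℓ)
    (hmin : IsLeast (Set.range hLpd.isHermitian.eigenvalues) ℓ)
    (x ξ dmodel γ γ' F d dhat : ℝ → EuclideanSpace ℝ (Fin n))
    (hd : ∀ t, d t = dmodel t + γ t)
    (hdm : Differentiable ℝ dmodel)
    (hγ : ∀ t, HasDerivAt γ (γ' t) t)
    (hx : ∀ t, HasDerivAt x (F t + d t) t)
    (hξ : ∀ t, HasDerivAt ξ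
      (-(Matrix.toEuclideanLin L
          (ξ t + dmodel t + Matrix.toEuclideanLin L (x t) + F t))) t)
    (hdhat : ∀ t, dhat t = dmodel t + Matrix.toEuclideanLin L (x t) + ξ t)
    (D : ℝ) (hD : ∀ t, 0 ≤ t → ‖γ' t‖ ≤ D) :
    ∀ t, 0 ≤ t → ‖dhat t - d t‖ ≤
      Real.exp (-ℓ * t) * ‖dhat 0 - d 0‖ + (D / ℓ) * (1 - Real.exp (-ℓ * t)) := by
  intro t ht
  have herr (s : ℝ) : dhat s - d s = Matrix.toEuclideanLin L (x s) + ξ s - γ s := by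
    rw [hdhat, hd]
    abel
  have hderiv (s : ℝ) : HasDerivAt (fun s => dhat s - d s)
      (-Matrix.toEuclideanLin L (dhat s - d s) - γ' s) s := by
    have hLx : HasDerivAt (fun s => Matrix.toEuclideanLin L (x s))
        (Matrix.toEuclideanLin L (F s + d s)) s :=
      (Matrix.toEuclideanLin L).toContinuousLinearMap.hasFDerivAt.comp_hasDerivAt s (hx s)
    rw [funext herr]
    refine ((hLx.add (hξ s)).sub (hγ s)).congr_deriv ?_
    rw [hdhat]
    simp only [map_add, map_sub]
    abel
  refine norm_le_exp_mul_add_of_inner_deriv_le hℓ ((norm_nonneg _).trans (hD 0 le_rfl))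
    hderiv (fun s hs => ?_) ht
  have hray := hLpd.isHermitian.mul_norm_sq_le_inner_toEuclideanLin
    (fun i => hmin.2 (Set.mem_range_self i)) (dhat s - d s)
  have hres : -inner ℝ (dhat s - d s) (γ' s) ≤ D * ‖dhat s - d s‖ := by
    rw [mul_comm]
    exact (neg_le_abs _).trans ((abs_real_inner_le_norm _ _).trans
      (mul_le_mul_of_nonneg_left (hD s hs) (norm_nonneg _)))
  rw [inner_sub_right, inner_neg_right]
  linarith
end

section
/- Let L be a symmetric positive-definite n×n real matrix. Let x, ξ, d_model, γ, F : ℝ → ℝⁿ with x, ξ, d_model, γ differentiable, d = d_model + γ, x'(t) = F(t) + d(t), ξ'(t) = −L(ξ(t) + d_model(t) + L x(t) + F(t)), and d̂ = d_model + L x + ξ. Then the estimation error d̃ = d̂ − d is differentiable and satisfies the error dynamics d̃'(t) = −L d̃(t) − γ'(t) for all t. -/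
open Matrix

/-- Key derivation in the proof of the paper's Theorem 1: the estimation error
`d̃ = d̂ − d` of the feedback-calibrated observer `d̂ = d_model + L x + ξ`,
`ξ' = −L(ξ + d_model + L x + F)`, for the system `x' = F + d`, `d = d_model + γ`,
is differentiable and obeys the error dynamics `d̃' = −L d̃ − γ'`. -/
theorem feedback_calibrated_observer_error_dynamics
    {n : ℕ} (L : Matrix (Fin n) (Fin n) ℝ)
    (hLsymm : L.IsSymm) (hLpd : L.PosDef)
    (x ξ dmodel γ γ' F d dhat : ℝ → EuclideanSpace ℝ (Fin n))
    (hd : ∀ t, d t = dmodel t + γ t)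
    (hdm : Differentiable ℝ dmodel)
    (hγ : ∀ t, HasDerivAt γ (γ' t) t)
    (hx : ∀ t, HasDerivAt x (F t + d t) t)
    (hξ : ∀ t, HasDerivAt ξ
      (-(Matrix.toEuclideanLin L
          (ξ t + dmodel t + Matrix.toEuclideanLin L (x t) + F t))) t)
    (hdhat : ∀ t, dhat t = dmodel t + Matrix.toEuclideanLin L (x t) + ξ t) :
    ∀ t, HasDerivAt (fun s => dhat s - d s)
      (-(Matrix.toEuclideanLin L (dhat t - d t)) - γ' t) t := by
  intro t
  have hLx : HasDerivAt (fun s => Matrix.toEuclideanLin L (x s))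
      (Matrix.toEuclideanLin L (F t + d t)) t :=
    (LinearMap.toContinuousLinearMap (Matrix.toEuclideanLin L)).hasFDerivAt.comp_hasDerivAt t (hx t)
  have herr : (fun s => dhat s - d s) =
      fun s => Matrix.toEuclideanLin L (x s) + ξ s - γ s := by
    funext s
    rw [hdhat, hd]
    abel
  rw [herr]
  refine ((hLx.add (hξ t)).sub (hγ t)).congr_deriv ?_
  rw [hdhat t]
  simp only [map_add, map_sub]
  abel
end

section
/- Let L be a symmetric positive-definite n×n real matrix whose smallest eigenvalue is ℓ > 0, let w : ℝ → ℝⁿ be continuous, and let y : ℝ → ℝⁿ be differentiable with y'(t) = −L y(t) − w(t) for all t ≥ 0. If limsup_{t→∞} ‖w(t)‖ ≤ D, then limsup_{t→∞} ‖y(t)‖ ≤ D/ℓ. -/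
open Matrix Filter

/-- The quadratic form of a Hermitian real matrix is bounded below by any lower bound of its
eigenvalues. -/
lemma Matrix.IsHermitian.mul_norm_sq_le_inner_toEuclideanLin_s3 {n : ℕ}
    {L : Matrix (Fin n) (Fin n) ℝ} (hL : L.IsHermitian) {ℓ : ℝ}
    (hmin : ∀ i, ℓ ≤ hL.eigenvalues i) (x : EuclideanSpace ℝ (Fin n)) :
    ℓ * ‖x‖ ^ 2 ≤ inner ℝ x (Matrix.toEuclideanLin L x) := by
  have hsymm := Matrix.isSymmetric_toEuclideanLin_iff.mpr hL
  have heig : ∀ i, Matrix.toEuclideanLin L (hL.eigenvectorBasis i)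
      = hL.eigenvalues i • hL.eigenvectorBasis i := fun i => by
    rw [Matrix.toLpLin_apply, hL.mulVec_eigenvectorBasis]
    rfl
  rw [← hL.eigenvectorBasis.sum_inner_mul_inner x,
    ← hL.eigenvectorBasis.sum_sq_norm_inner_right x, Finset.mul_sum]
  refine Finset.sum_le_sum fun i _ => ?_
  rw [← hsymm, heig, real_inner_smul_left, real_inner_comm, Real.norm_eq_abs, sq_abs]
  nlinarith [mul_le_mul_of_nonneg_right (hmin i)
    (sq_nonneg (inner ℝ x (hL.eigenvectorBasis i)))]

/-- Comparison principle: if `V' ≤ -a (V - b)` on `[T, ∞)` with `a > 0`, then `V` is eventually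
below every number larger than `b`. -/
lemma eventually_lt_of_deriv_le_neg_mul_sub {V V' : ℝ → ℝ} {a b c T : ℝ} (ha : 0 < a)
    (hV : ∀ t, T ≤ t → HasDerivAt V (V' t) t)
    (hV' : ∀ t, T ≤ t → V' t ≤ -a * (V t - b)) (hbc : b < c) :
    ∀ᶠ t in atTop, V t < c := by
  have hderiv : ∀ t, T ≤ t → HasDerivAt (fun s => Real.exp (a * s) * (V s - b))
      (Real.exp (a * t) * a * (V t - b) + Real.exp (a * t) * V' t) t := fun t ht => by
    have hexp : HasDerivAt (fun s => Real.exp (a * s)) (Real.exp (a * t) * a) t := by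
      simpa using ((hasDerivAt_id t).const_mul a).exp
    exact hexp.mul ((hV t ht).sub_const b)
  have hanti : AntitoneOn (fun s => Real.exp (a * s) * (V s - b)) (Set.Ici T) := by
    refine antitoneOn_of_hasDerivWithinAt_nonpos (convex_Ici T)
      (fun t ht => (hderiv t ht).continuousAt.continuousWithinAt)
      (fun t ht => (hderiv t (interior_subset ht)).hasDerivWithinAt) fun t ht => ?_
    nlinarith [mul_le_mul_of_nonneg_left (hV' t (interior_subset ht)) (Real.exp_pos (a * t)).le]
  have hgrow : Tendsto (fun t => Real.exp (a * t) * (c - b)) atTop atTop :=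
    (Real.tendsto_exp_atTop.comp (tendsto_id.const_mul_atTop ha)).atTop_mul_const
      (sub_pos.mpr hbc)
  filter_upwards [hgrow.eventually_gt_atTop (Real.exp (a * T) * (V T - b)),
    eventually_ge_atTop T] with t hlt ht
  have hle := hanti Set.self_mem_Ici (Set.mem_Ici.mpr ht) ht
  have := lt_of_mul_lt_mul_left (hle.trans_lt hlt) (Real.exp_pos (a * t)).le
  linarith

/-- Ultimate-boundedness corollary underlying the paper's Theorem 1:
for `y' = −L y − w` with `L` symmetric positive definite with smallest
eigenvalue `ℓ > 0` and `limsup_{t→∞} ‖w(t)‖ ≤ D`, one has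
`limsup_{t→∞} ‖y(t)‖ ≤ D/ℓ`.  (The limsups are taken in `EReal` so that
no junk values occur for unbounded signals.) -/
theorem perturbed_linear_ode_limsup_bound
    {n : ℕ} (L : Matrix (Fin n) (Fin n) ℝ)
    (hLsymm : L.IsSymm) (hLpd : L.PosDef)
    (ℓ : ℝ) (hℓ : 0 < ℓ)
    (hmin : IsLeast (Set.range hLpd.isHermitian.eigenvalues) ℓ)
    (w y : ℝ → EuclideanSpace ℝ (Fin n))
    (hw : Continuous w)
    (hy : ∀ t, 0 ≤ t →
      HasDerivAt y (-(Matrix.toEuclideanLin L (y t)) - w t) t)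
    (D : ℝ)
    (hD : Filter.limsup (fun t => (‖w t‖ : EReal)) Filter.atTop ≤ (D : EReal)) :
    Filter.limsup (fun t => (‖y t‖ : EReal)) Filter.atTop ≤ ((D / ℓ : ℝ) : EReal) := by
  refine EReal.le_of_forall_lt_iff_le.mp fun c hc => ?_
  obtain ⟨b, hDb, hbc⟩ := exists_between (EReal.coe_lt_coe_iff.mp hc)
  have hwlt : ∀ᶠ t in atTop, ‖w t‖ < b * ℓ := by
    have hlt : (D : EReal) < ((b * ℓ : ℝ) : EReal) :=
      EReal.coe_lt_coe_iff.mpr ((div_lt_iff₀ hℓ).mp hDb)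
    filter_upwards [eventually_lt_of_limsup_lt (hD.trans_lt hlt)] with t ht
    exact EReal.coe_lt_coe_iff.mp ht
  obtain ⟨T, hT⟩ := eventually_atTop.mp (hwlt.and (eventually_ge_atTop 0))
  have hb : 0 < b := pos_of_mul_pos_left ((norm_nonneg _).trans_lt (hT T le_rfl).1) hℓ.le
  have hsq : ∀ᶠ t in atTop, ‖y t‖ ^ 2 < c ^ 2 := by
    refine eventually_lt_of_deriv_le_neg_mul_sub (b := b ^ 2) hℓ
      (fun t ht => (hy t (hT t ht).2).norm_sq) (fun t ht => ?_) (by gcongr)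
    have hquad := hLpd.isHermitian.mul_norm_sq_le_inner_toEuclideanLin_s3
      (fun i => hmin.2 (Set.mem_range_self i)) (y t)
    have hcross : -inner ℝ (y t) (w t) ≤ ‖y t‖ * (b * ℓ) :=
      ((neg_le_abs _).trans (abs_real_inner_le_norm _ _)).trans
        (mul_le_mul_of_nonneg_left (hT t ht).1.le (norm_nonneg _))
    rw [inner_sub_right, inner_neg_right]
    nlinarith [mul_nonneg hℓ.le (sq_nonneg (‖y t‖ - b))]
  refine limsup_le_of_le (by isBoundedDefault) ?_
  filter_upwards [hsq] with t ht
  exact EReal.coe_le_coe_iff.mpr (lt_of_pow_lt_pow_left₀ 2 (hb.trans hbc).le ht).le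
end

section
/- Let a > 0 and c ≥ 0, and let V : [0,∞) → ℝ be differentiable and nonnegative with V'(t) ≤ −2a V(t) + 2c √(V(t)) for all t ≥ 0. Then for all t ≥ 0, √(V(t)) ≤ e^{−a t} √(V(0)) + (c/a)(1 − e^{−a t}). -/
/-- Square-root comparison lemma used in the proofs of the paper's Theorems 1
and 2: if `V ≥ 0` is differentiable on `[0,∞)` with
`V' ≤ −2a V + 2c √V` (`a > 0`, `c ≥ 0`), then
`√(V(t)) ≤ e^{−a t} √(V(0)) + (c/a)(1 − e^{−a t})` for all `t ≥ 0`. -/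
theorem sqrt_comparison_lemma
    (a c : ℝ) (ha : 0 < a) (hc : 0 ≤ c)
    (V V' : ℝ → ℝ)
    (hV : ∀ t, 0 ≤ t → HasDerivAt V (V' t) t)
    (hVnonneg : ∀ t, 0 ≤ t → 0 ≤ V t)
    (hV' : ∀ t, 0 ≤ t → V' t ≤ -2 * a * V t + 2 * c * Real.sqrt (V t)) :
    ∀ t, 0 ≤ t → Real.sqrt (V t) ≤
      Real.exp (-a * t) * Real.sqrt (V 0) + (c / a) * (1 - Real.exp (-a * t)) := by
  intro t ht
  refine le_of_forall_pos_le_add fun ε hε => ?_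
  -- `y` solves `y' = -a * y + c`, so `(y + ε) ^ 2` is a strict supersolution.
  set y : ℝ → ℝ := fun s =>
    Real.exp (-a * s) * Real.sqrt (V 0) + (c / a) * (1 - Real.exp (-a * s)) with hy
  have hy_nonneg : ∀ s, 0 ≤ s → 0 ≤ y s := fun s hs => by
    have hexp : Real.exp (-a * s) ≤ 1 := Real.exp_le_one_iff.2 (by nlinarith)
    have := mul_nonneg (div_nonneg hc ha.le) (sub_nonneg.2 hexp)
    positivity
  have hy_deriv : ∀ s, HasDerivAt y (-a * y s + c) s := fun s => by
    have hexp : HasDerivAt (fun s => Real.exp (-a * s)) (Real.exp (-a * s) * (-a)) s := by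
      simpa using ((hasDerivAt_id s).const_mul (-a)).exp
    refine ((hexp.mul_const (Real.sqrt (V 0))).fun_add
      ((hexp.const_sub 1).const_mul (c / a))).congr_deriv ?_
    simp only [hy]
    field_simp
    ring
  have hB : ∀ s, HasDerivAt (fun s => (y s + ε) ^ 2) (2 * (y s + ε) * (-a * y s + c)) s :=
    fun s => by simpa using ((hy_deriv s).add_const ε).fun_pow 2
  have hle : V t ≤ (y t + ε) ^ 2 := by
    refine image_le_of_deriv_right_lt_deriv_boundary
      (fun s hs => (hV s hs.1).continuousAt.continuousWithinAt)
      (fun s hs => (hV s hs.1).hasDerivWithinAt) ?_ hB ?_ (Set.right_mem_Icc.2 ht)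
    · have hy0 : y 0 = Real.sqrt (V 0) := by simp [hy]
      rw [hy0]
      nlinarith [Real.sq_sqrt (hVnonneg 0 le_rfl), Real.sqrt_nonneg (V 0)]
    · intro s hs hVs
      have hpos : 0 < y s + ε := add_pos_of_nonneg_of_pos (hy_nonneg s hs.1) hε
      have hbound := hV' s hs.1
      rw [hVs, Real.sqrt_sq hpos.le] at hbound
      nlinarith [mul_pos (mul_pos ha hε) hpos]
  exact Real.sqrt_le_iff.2 ⟨add_nonneg (hy_nonneg t ht) hε.le, hle⟩
end
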